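/- Let k be a positive integer such that Σ_{n ≥ -k} ℓ_{n,k}² < ∞. Then for every real t the series Σ_{n ≥ -k} ℓ_{n,k} ((1/2 - it)/(1/2 + it))^n converges and its sum equals ζ(1/2 + it)^k. -/

import Mathlib

open scoped Real Topology
open Complex Filter MeasureTheory Finset Asymptotics

/-- The analytic extension of `s ↦ ((s-1) * ζ(s))^k` to `s = 1` (where its value is `1`). -/
noncomputable def zetaPowAux (k : ℕ) : ℂ → ℂ :=
  Function.update (fun s : ℂ => ((s - 1) * riemannZeta s) ^ k) 1 1

/-- `lam k j` is the Taylor coefficient `λ_{j,k}`, i.e. the `j`-th derivative at `s = 1` of the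
analytic extension of `(s-1)^k ζ(s)^k`; these numbers are real, and we record their real part. -/
noncomputable def lam (k j : ℕ) : ℝ :=
  (iteratedDeriv j (zetaPowAux k) 1).re

/-- The Fourier coefficients `ℓ_{n,k}` for `n ≥ -k` (an integer index). -/
noncomputable def ell (k : ℕ) (n : ℤ) : ℝ :=
  if 1 ≤ n then
    (-1 : ℝ) ^ n.toNat *
      ∑ j ∈ Finset.Icc 1 n.toNat,
        ((n.toNat - 1).choose (j - 1) : ℝ) * lam k (j + k) / (Nat.factorial (j + k))
  else
    (-1 : ℝ) ^ k *
      ∑ j ∈ Finset.range ((k + n).toNat + 1),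
        ((k - j).choose (-n).toNat : ℝ) * (-1 : ℝ) ^ j * lam k j / (Nat.factorial j)

/-- The Lindelöf Hypothesis: `ζ(1/2 + it) = O(|t|^ε)` for every `ε > 0`. -/
def LindelofHypothesis : Prop :=
  ∀ ε : ℝ, 0 < ε → ∃ C : ℝ, ∀ t : ℝ, 1 ≤ |t| →
    ‖riemannZeta (1 / 2 + t * Complex.I)‖ ≤ C * |t| ^ ε

/-- `dk k n` is the Piltz divisor function `d_k(n)`: the number of representations of `n` as an
ordered product of `k` positive integers (the `k`-th Dirichlet-convolution power of `ζ`). -/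
noncomputable def dk (k n : ℕ) : ℕ := (ArithmeticFunction.zeta ^ k) n

/-- The coefficients `a_{j,k}` of the polynomial `P_k`. -/
noncomputable def aCoef (k j : ℕ) : ℝ :=
  (-1 : ℝ) ^ (k - 1 - j) *
    ∑ i ∈ Finset.range (k - 1 - j + 1), (-1 : ℝ) ^ i * lam k i / (Nat.factorial i)

/-- The error term `Δ_k(x) = (Σ_{1 ≤ n ≤ x} d_k(n)) - x P_k(log x)` in the Piltz divisor
problem. -/
noncomputable def Deltak (k : ℕ) (x : ℝ) : ℝ :=
  (∑ n ∈ Finset.Icc 1 ⌊x⌋₊, (dk k n : ℝ)) -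
    x * ∑ j ∈ Finset.range k, aCoef k j / (Nat.factorial j) * (Real.log x) ^ j

/-- The `n`-th Laguerre polynomial. -/
noncomputable def laguerre (n : ℕ) (u : ℝ) : ℝ :=
  ∑ j ∈ Finset.range (n + 1), (n.choose j : ℝ) * (-1 : ℝ) ^ j * u ^ j / (Nat.factorial j)

/-- The Bessel function of the first kind of order `0`. -/
noncomputable def besselJ0 (u : ℝ) : ℝ :=
  ∑' m : ℕ, (-1 : ℝ) ^ m * (u / 2) ^ (2 * m) / ((Nat.factorial m : ℝ) ^ 2)

/-- `φ_k(x) = ∫_1^∞ Δ_k(r) J₀(2 √(x log r)) r⁻² dr`. -/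
noncomputable def phik (k : ℕ) (x : ℝ) : ℝ :=
  ∫ r in Set.Ioi (1 : ℝ), Deltak k r * besselJ0 (2 * Real.sqrt (x * Real.log r)) / r ^ 2

/-!
Under `s = 1 / (1 + z)`, with inverse `z = (1 - s) / s`, the unit circle corresponds to the critical
line. Since `s - 1 = -z / (1 + z)`, the function `f z = (z * ζ(1 / (1 + z))) ^ k` equals
`(-(1 + z)) ^ k * ((s - 1) * ζ(s)) ^ k`; expanding the last factor in powers of `s - 1` and applying
the binomial series to each term shows that its Taylor coefficients at `0` are the `ℓ_{m - k, k}`.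

Let `f` be any function on the unit disc with square-summable Taylor coefficients `a n`, that is, a
function in the Hardy space `H²`, and let `f z - c = O(z - w)` at a point `w` of the unit circle.
The quotient `(f z - c) / (1 - z / w)` is bounded near `w` and is `O(1 + |f z|)` elsewhere, so it
lies in `H²` too and its Taylor coefficients tend to `0`. Up to a factor of modulus one these are
`∑ i ≤ n, a i * w ^ i - c`.
-/

section Parseval

variable {a b : ℕ → ℂ} {f g : ℂ → ℂ} {r : ℝ}

lemma summable_norm_mul_abs_pow_of_hasSum_sphere
    (hf : ∀ z ∈ Metric.sphere (0 : ℂ) |r|, HasSum (fun n => a n * z ^ n) (f z)) :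
    Summable fun n => ‖a n‖ * |r| ^ n := by
  simpa using (hf r (by simp)).summable.norm

lemma continuousOn_sphere_of_hasSum
    (hf : ∀ z ∈ Metric.sphere (0 : ℂ) |r|, HasSum (fun n => a n * z ^ n) (f z)) :
    ContinuousOn f (Metric.sphere 0 |r|) := by
  have hsum : ContinuousOn (fun z => ∑' n, a n * z ^ n) (Metric.sphere 0 |r|) := by
    refine continuousOn_tsum (fun n => by fun_prop)
      (summable_norm_mul_abs_pow_of_hasSum_sphere hf) fun n z hz => ?_
    rw [norm_mul, norm_pow, mem_sphere_zero_iff_norm.1 hz]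
  exact hsum.congr fun z hz => (hf z hz).tsum_eq.symm

lemma sum_range_norm_sq_mul_pow_eq_circleAverage (a : ℕ → ℂ) (r : ℝ) (N : ℕ) :
    ∑ n ∈ range N, ‖a n‖ ^ 2 * r ^ (2 * n) =
      Real.circleAverage (fun z => ‖∑ n ∈ range N, a n * z ^ n‖ ^ 2) 0 r := by
  set p : Polynomial ℂ := ∑ n ∈ range N, Polynomial.monomial n (a n * r ^ n) with hp
  have hcoeff (n : ℕ) : p.coeff n = if n < N then a n * r ^ n else 0 := by
    simp [hp, Polynomial.finsetSum_coeff, Polynomial.coeff_monomial]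
  have heval (z : ℂ) : p.eval z = ∑ n ∈ range N, a n * (r * z + 0) ^ n := by
    simp [hp, Polynomial.eval_finsetSum, mul_pow, mul_assoc]
  have hsupp : p.support ⊆ range N := fun n hn => by
    by_contra hnN
    simp_all
  rw [Real.circleAverage_eq_circleAverage_zero_one]
  simp_rw [← heval]
  rw [← p.sum_sq_norm_coeff_eq_circleAverage, Finset.sum_subset hsupp (by simp)]
  refine Finset.sum_congr rfl fun n hn => ?_
  rw [hcoeff, if_pos (mem_range.1 hn), norm_mul, norm_pow, Complex.norm_real, mul_pow, ← pow_mul,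
    mul_comm n, pow_mul ‖r‖, Real.norm_eq_abs, sq_abs, ← pow_mul]

theorem hasSum_norm_sq_mul_pow_circleAverage
    (hf : ∀ z ∈ Metric.sphere (0 : ℂ) |r|, HasSum (fun n => a n * z ^ n) (f z)) :
    HasSum (fun n => ‖a n‖ ^ 2 * r ^ (2 * n)) (Real.circleAverage (fun z => ‖f z‖ ^ 2) 0 r) := by
  have hsummable := summable_norm_mul_abs_pow_of_hasSum_sphere hf
  have hbound {z : ℂ} (hz : z ∈ Metric.sphere 0 |r|) (N : ℕ) :
      ‖∑ n ∈ range N, a n * z ^ n‖ ≤ ∑' n, ‖a n‖ * |r| ^ n :=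
    calc ‖∑ n ∈ range N, a n * z ^ n‖ ≤ ∑ n ∈ range N, ‖a n‖ * |r| ^ n :=
          norm_sum_le_of_le _ fun n _ => by
            rw [norm_mul, norm_pow, mem_sphere_zero_iff_norm.1 hz]
      _ ≤ _ := hsummable.sum_le_tsum _ fun n _ => by positivity
  rw [hasSum_iff_tendsto_nat_of_nonneg fun n => by rw [pow_mul]; positivity]
  simp_rw [sum_range_norm_sq_mul_pow_eq_circleAverage]
  refine Tendsto.const_smul (intervalIntegral.tendsto_integral_filter_of_dominated_convergence
    (fun _ => (∑' n, ‖a n‖ * |r| ^ n) ^ 2) (.of_forall fun N => ?_)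
    (.of_forall fun N => .of_forall fun θ _ => ?_) (by simp) (.of_forall fun θ _ => ?_)) _
  · exact Continuous.aestronglyMeasurable (by fun_prop)
  · rw [norm_pow, norm_norm]
    gcongr
    exact hbound (circleMap_mem_sphere' 0 r θ) N
  · exact (hf _ (circleMap_mem_sphere' 0 r θ)).tendsto_sum_nat.norm.pow 2

lemma circleAverage_norm_sq_le_tsum_norm_sq (ha : Summable fun n => ‖a n‖ ^ 2) (hr : |r| ≤ 1)
    (hf : ∀ z ∈ Metric.sphere (0 : ℂ) |r|, HasSum (fun n => a n * z ^ n) (f z)) :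
    Real.circleAverage (fun z => ‖f z‖ ^ 2) 0 r ≤ ∑' n, ‖a n‖ ^ 2 := by
  refine hasSum_le (fun n => ?_) (hasSum_norm_sq_mul_pow_circleAverage hf) ha.hasSum
  rw [pow_mul]
  exact mul_le_of_le_one_right (by positivity)
    (pow_le_one₀ (sq_nonneg r) ((sq_le_one_iff_abs_le_one r).2 hr))

lemma summable_norm_sq_of_circleAverage_le {M : ℝ}
    (hf : ∀ z ∈ Metric.ball (0 : ℂ) 1, HasSum (fun n => a n * z ^ n) (f z))
    (hM : ∀ r ∈ Set.Ioo (0 : ℝ) 1, Real.circleAverage (fun z => ‖f z‖ ^ 2) 0 r ≤ M) :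
    Summable fun n => ‖a n‖ ^ 2 := by
  refine summable_of_sum_range_le (c := M) (fun n => by positivity) fun N => ?_
  have hlim : Tendsto (fun r : ℝ => ∑ n ∈ range N, ‖a n‖ ^ 2 * r ^ (2 * n)) (𝓝[<] 1)
      (𝓝 (∑ n ∈ range N, ‖a n‖ ^ 2 * 1 ^ (2 * n))) :=
    (Continuous.tendsto (by fun_prop) _).mono_left nhdsWithin_le_nhds
  simp only [one_pow, mul_one] at hlim
  refine le_of_tendsto hlim ?_
  filter_upwards [Ioo_mem_nhdsLT one_pos] with r hr
  have hsphere : Metric.sphere (0 : ℂ) |r| ⊆ Metric.ball 0 1 :=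
    Metric.sphere_subset_ball (by rw [abs_of_pos hr.1]; exact hr.2)
  exact (sum_le_hasSum _ (fun n _ => by rw [pow_mul]; positivity)
    (hasSum_norm_sq_mul_pow_circleAverage fun z hz => hf z (hsphere hz))).trans (hM r hr)

theorem summable_norm_sq_of_norm_le {B C : ℝ}
    (hf : ∀ z ∈ Metric.ball (0 : ℂ) 1, HasSum (fun n => a n * z ^ n) (f z))
    (hg : ∀ z ∈ Metric.ball (0 : ℂ) 1, HasSum (fun n => b n * z ^ n) (g z))
    (ha : Summable fun n => ‖a n‖ ^ 2)
    (hfg : ∀ z ∈ Metric.ball (0 : ℂ) 1, ‖g z‖ ≤ B + C * ‖f z‖) :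
    Summable fun n => ‖b n‖ ^ 2 := by
  refine summable_norm_sq_of_circleAverage_le
    (M := 2 * B ^ 2 + 2 * C ^ 2 * ∑' n, ‖a n‖ ^ 2) hg fun r hr => ?_
  have hsphere : Metric.sphere (0 : ℂ) |r| ⊆ Metric.ball 0 1 :=
    Metric.sphere_subset_ball (by rw [abs_of_pos hr.1]; exact hr.2)
  have hfr := fun z hz => hf z (hsphere hz)
  have hgr := fun z hz => hg z (hsphere hz)
  have hf_int : CircleIntegrable (fun z => 2 * C ^ 2 * ‖f z‖ ^ 2) 0 r :=
    (((continuousOn_sphere_of_hasSum hfr).norm.pow 2).const_mul _).circleIntegrable'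
  have hg_int : CircleIntegrable (fun z => ‖g z‖ ^ 2) 0 r :=
    ((continuousOn_sphere_of_hasSum hgr).norm.pow 2).circleIntegrable'
  have hsq : ∀ z ∈ Metric.sphere (0 : ℂ) |r|,
      ‖g z‖ ^ 2 ≤ 2 * B ^ 2 + 2 * C ^ 2 * ‖f z‖ ^ 2 := fun z hz =>
    calc ‖g z‖ ^ 2 ≤ (B + C * ‖f z‖) ^ 2 := by gcongr; exact hfg z (hsphere hz)
      _ ≤ 2 * (B ^ 2 + (C * ‖f z‖) ^ 2) := add_sq_le
      _ = _ := by ring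
  calc Real.circleAverage (fun z => ‖g z‖ ^ 2) 0 r
      ≤ Real.circleAverage (fun z => 2 * B ^ 2 + 2 * C ^ 2 * ‖f z‖ ^ 2) 0 r :=
        Real.circleAverage_mono hg_int ((circleIntegrable_const _ _ _).add hf_int) hsq
    _ = 2 * B ^ 2 + 2 * C ^ 2 * Real.circleAverage (fun z => ‖f z‖ ^ 2) 0 r := by
        rw [Real.circleAverage_fun_add (circleIntegrable_const _ _ _) hf_int,
          Real.circleAverage_const]
        simp_rw [← smul_eq_mul (2 * C ^ 2), Real.circleAverage_fun_smul]
    _ ≤ _ := by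
        gcongr
        exact circleAverage_norm_sq_le_tsum_norm_sq ha (by rw [abs_of_pos hr.1]; exact hr.2.le) hfr

end Parseval

section Tauberian

lemma hasSum_sum_range_sub_mul_div_pow {𝕜 : Type*} [NormedField 𝕜] [CompleteSpace 𝕜]
    {a : ℕ → 𝕜} {z w s : 𝕜} (ha : Summable fun n => ‖a n * z ^ n‖)
    (hs : HasSum (fun n => a n * z ^ n) s) (hzw : ‖z‖ < ‖w‖) (c : 𝕜) :
    HasSum (fun n => (∑ i ∈ range (n + 1), a i * w ^ i - c) * (z / w) ^ n)
      ((s - c) / (1 - z / w)) := by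
  have hw : w ≠ 0 := norm_pos_iff.1 ((norm_nonneg z).trans_lt hzw)
  have hq : ‖z / w‖ < 1 := by rwa [norm_div, div_lt_one (norm_pos_iff.2 hw)]
  have hgeom := hasSum_geometric_of_norm_lt_one hq
  have hprod := hasSum_sum_range_mul_of_summable_norm ha (summable_norm_geometric_of_norm_lt_one hq)
  rw [hs.tsum_eq, hgeom.tsum_eq] at hprod
  convert! hprod.sub (hgeom.mul_left c) using 1
  · ext n
    rw [sub_mul, Finset.sum_mul]
    congr 1
    refine Finset.sum_congr rfl fun i hi => ?_
    obtain ⟨j, rfl⟩ := Nat.exists_eq_add_of_le (mem_range_succ_iff.1 hi)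
    rw [add_tsub_cancel_left, pow_add, div_pow z w i]
    field_simp
  · rw [div_eq_mul_inv, sub_mul]

lemma exists_norm_div_le_of_isBigO {𝕜 : Type*} [NormedField 𝕜] {s : Set 𝕜} {f : 𝕜 → 𝕜} {w c : 𝕜}
    (hfc : (fun z => f z - c) =O[𝓝[s] w] fun z => z - w) :
    ∃ B C : ℝ, ∀ z ∈ s, ‖(f z - c) / (z - w)‖ ≤ B + C * ‖f z‖ := by
  obtain ⟨K, hK, hKbound⟩ := hfc.exists_pos
  obtain ⟨ε, hε, hnear⟩ := Metric.mem_nhdsWithin_iff.1 hKbound.bound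
  refine ⟨K + ‖c‖ / ε, 1 / ε, fun z hz => ?_⟩
  suffices ‖(f z - c) / (z - w)‖ ≤ K + (‖f z‖ + ‖c‖) / ε from this.trans_eq (by ring)
  rw [norm_div]
  rcases lt_or_ge (dist z w) ε with hzw | hzw
  · calc ‖f z - c‖ / ‖z - w‖ ≤ K := div_le_of_le_mul₀ (norm_nonneg _) hK.le (hnear ⟨hzw, hz⟩)
      _ ≤ _ := le_add_of_nonneg_right (by positivity)
  · rw [dist_eq_norm] at hzw
    calc ‖f z - c‖ / ‖z - w‖ ≤ (‖f z‖ + ‖c‖) / ε := by gcongr; exact norm_sub_le _ _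
      _ ≤ _ := le_add_of_nonneg_left hK.le

theorem tendsto_sum_range_of_summable_norm_sq {a : ℕ → ℂ} {f : ℂ → ℂ} {w c : ℂ} (hw : ‖w‖ = 1)
    (ha : Summable fun n => ‖a n‖ ^ 2)
    (hf : ∀ z ∈ Metric.ball (0 : ℂ) 1, HasSum (fun n => a n * z ^ n) (f z))
    (hfc : (fun z => f z - c) =O[𝓝[Metric.ball 0 1] w] fun z => z - w) :
    Tendsto (fun N => ∑ n ∈ range N, a n * w ^ n) atTop (𝓝 c) := by
  have hw0 : w ≠ 0 := norm_ne_zero_iff.1 (by simp [hw])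
  have hquot : ∀ z ∈ Metric.ball (0 : ℂ) 1, HasSum
      (fun n => (∑ i ∈ range (n + 1), a i * w ^ i - c) * w⁻¹ ^ n * z ^ n)
      ((f z - c) / (1 - z / w)) := fun z hz => by
    have hzw : ‖z‖ < ‖w‖ := by rw [hw]; exact mem_ball_zero_iff.1 hz
    simpa only [div_eq_inv_mul z w, mul_pow, mul_assoc] using
      hasSum_sum_range_sub_mul_div_pow (hf z hz).summable.norm (hf z hz) hzw c
  obtain ⟨B, C, hBC⟩ := exists_norm_div_le_of_isBigO hfc
  have hquot_le : ∀ z ∈ Metric.ball (0 : ℂ) 1, ‖(f z - c) / (1 - z / w)‖ ≤ B + C * ‖f z‖ :=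
    fun z hz => by
      have hden : ‖1 - z / w‖ = ‖z - w‖ := by
        rw [one_sub_div hw0, norm_div, hw, div_one, norm_sub_rev]
      simpa only [norm_div, hden] using hBC z hz
  have hcoeff := (summable_norm_sq_of_norm_le hf hquot ha hquot_le).tendsto_atTop_zero.sqrt
  simp only [norm_mul, norm_pow, norm_inv, hw, inv_one, one_pow, mul_one, Real.sqrt_zero,
    Real.sqrt_sq (norm_nonneg _)] at hcoeff
  rwa [← tendsto_add_atTop_iff_nat 1, tendsto_iff_norm_sub_tendsto_zero]

lemma tendsto_sum_range_mul_zpow_sub {𝕜 : Type*} [Field 𝕜] [TopologicalSpace 𝕜] [ContinuousMul 𝕜]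
    {a : ℕ → 𝕜} {w c : 𝕜} {k : ℕ} (hw : w ≠ 0)
    (ha : Tendsto (fun N => ∑ m ∈ range N, a m * w ^ m) atTop (𝓝 (w ^ k * c))) :
    Tendsto (fun N => ∑ m ∈ range N, a m * w ^ ((m : ℤ) - k)) atTop (𝓝 c) := by
  have hshift := ha.const_mul (w ^ k)⁻¹
  rw [inv_mul_cancel_left₀ (pow_ne_zero k hw)] at hshift
  refine hshift.congr fun N => ?_
  rw [Finset.mul_sum]
  refine Finset.sum_congr rfl fun m _ => ?_
  rw [zpow_sub₀ hw, zpow_natCast, zpow_natCast, div_eq_inv_mul, mul_left_comm]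

end Tauberian

section BinomialSeries

lemma choose_natCast_sub_natCast {R : Type*} [Ring R] [BinomialRing R] {j k : ℕ} (hjk : j ≤ k)
    (i : ℕ) : Ring.choose (k - j : R) i = (k - j).choose i := by
  rw [← Nat.cast_sub hjk, Ring.choose_natCast]

lemma choose_neg_natCast_add_one {R : Type*} [Ring R] [BinomialRing R] (d i : ℕ) :
    Ring.choose (-(d + 1) : R) i = (-1) ^ i * (d + i).choose d := by
  rw [Ring.choose_neg, show (d + 1 + i - 1 : R) = (d + i : ℕ) by push_cast; abel,
    Ring.choose_natCast, Nat.choose_symm_add, Int.negOnePow_def]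
  simp [Units.smul_def]

lemma sum_range_mul_choose_eq_zero {R : Type*} [Ring R] [BinomialRing R] {k m : ℕ} (hkm : k < m)
    (x : ℕ → R) :
    ∑ j ∈ range (k + 1), x j * Ring.choose (k - j : R) (m - j) = 0 := by
  refine Finset.sum_eq_zero fun j hj => ?_
  have hjk : j ≤ k := mem_range_succ_iff.1 hj
  rw [choose_natCast_sub_natCast hjk, Nat.choose_eq_zero_of_lt (by omega), Nat.cast_zero,
    mul_zero]

lemma factorial_mul_choose_eq_prod_range {R : Type*} [CommRing R] [BinomialRing R] (a : R) (n : ℕ) :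
    n.factorial * Ring.choose a n = ∏ i ∈ range n, (a - i) := by
  rw [← nsmul_eq_mul, ← Ring.descPochhammer_eq_factorial_smul_choose,
    Polynomial.descPochhammer_smeval_eq_ascPochhammer, Polynomial.ascPochhammer_smeval_eq_eval,
    ← descPochhammer_eval_eq_ascPochhammer, descPochhammer_eval_eq_prod_range]

lemma norm_choose_le_choose {α : ℂ} {r : ℝ} (hα : ‖α‖ ≤ r) (n : ℕ) :
    ‖Ring.choose α n‖ ≤ Ring.choose (r + n - 1) n := by
  refine le_of_mul_le_mul_left ?_ (Nat.cast_pos.2 n.factorial_pos)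
  calc (n.factorial : ℝ) * ‖Ring.choose α n‖ = ∏ i ∈ range n, ‖α - i‖ := by
        rw [← norm_prod, ← factorial_mul_choose_eq_prod_range, norm_mul, Complex.norm_natCast]
    _ ≤ ∏ i ∈ range n, (r + i) := by
        gcongr with i
        exact (norm_sub_le _ _).trans (by rw [Complex.norm_natCast]; gcongr)
    _ = ∏ i ∈ range n, (r + n - 1 - i) := by
        rw [← Finset.prod_range_reflect]
        refine Finset.prod_congr rfl fun i hi => ?_
        have hin : 1 + i ≤ n := by rw [add_comm]; exact mem_range.1 hi
        rw [Nat.sub_sub, Nat.cast_sub hin]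
        push_cast
        ring
    _ = n.factorial * Ring.choose (r + n - 1) n := (factorial_mul_choose_eq_prod_range _ _).symm

lemma hasSum_choose_mul_pow (α : ℂ) {z : ℂ} (hz : ‖z‖ < 1) :
    HasSum (fun n => Ring.choose α n * z ^ n) ((1 + z) ^ α) := by
  simpa [FormalMultilinearSeries.ofScalars_apply_eq, binomialSeries, mul_comm] using
    (Complex.one_add_cpow_hasFPowerSeriesOnBall_zero (a := α)).hasSum (y := z)
      (by simpa [← ofReal_norm] using hz)

lemma hasSum_choose_add_sub_one_mul_pow (r : ℝ) {x : ℝ} (hx : |x| < 1) :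
    HasSum (fun n : ℕ => Ring.choose (r + n - 1) n * x ^ n) (1 / (1 - x) ^ r) := by
  simpa [FormalMultilinearSeries.ofScalars_apply_eq, mul_comm] using
    (Real.one_div_one_sub_rpow_hasFPowerSeriesOnBall_zero r).hasSum (y := x)
      (by simpa [← ofReal_norm] using hx)

lemma tsum_norm_choose_mul_pow_le {α z : ℂ} {r : ℝ} (hα : ‖α‖ ≤ r) (hz : ‖z‖ < 1) :
    ∑' n, ‖Ring.choose α n * z ^ n‖ ≤ 1 / (1 - ‖z‖) ^ r := by
  refine hasSum_le (fun n => ?_) (hasSum_choose_mul_pow α hz).summable.norm.hasSum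
    (hasSum_choose_add_sub_one_mul_pow r (by rwa [abs_norm]))
  rw [norm_mul, norm_pow]
  gcongr
  exact norm_choose_le_choose hα n

lemma one_add_ne_zero_of_norm_lt_one {𝕜 : Type*} [NormedField 𝕜] {z : 𝕜} (hz : ‖z‖ < 1) :
    1 + z ≠ 0 := fun h => by
  rw [← neg_eq_of_add_eq_zero_right h, norm_neg, norm_one] at hz
  exact hz.false

end BinomialSeries

section EulerTransform

variable {c : ℕ → ℂ} {z : ℂ}

lemma hasSum_sum_range_of_hasSum_prod {M : Type*} [AddCommMonoid M] [TopologicalSpace M]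
    [ContinuousAdd M] [RegularSpace M] {F : ℕ × ℕ → M} {S : M} (hF : HasSum F S) :
    HasSum (fun m => ∑ j ∈ range (m + 1), F (j, m - j)) S := by
  have hanti := ((Equiv.hasSum_iff Finset.HasAntidiagonal.sigmaAntidiagonalEquivProd).2 hF).sigma
    fun m => hasSum_fintype _
  convert! hanti using 2 with m
  rw [← Finset.Nat.sum_antidiagonal_eq_sum_range_succ_mk]
  exact (Finset.sum_coe_sort _ _).symm

lemma summable_mul_pow_mul_choose_mul_pow (hc : ∀ u, Summable fun j => c j * u ^ j) (α : ℂ)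
    (hz : ‖z‖ < 1) :
    Summable fun p : ℕ × ℕ => c p.1 * (-z) ^ p.1 * (Ring.choose (α - p.1) p.2 * z ^ p.2) := by
  have hz' : 0 < 1 - ‖z‖ := sub_pos.2 hz
  rw [← summable_norm_iff, summable_prod_of_nonneg fun _ => norm_nonneg _]
  dsimp only
  refine ⟨fun j => ((hasSum_choose_mul_pow (α - j) hz).summable.mul_left _).norm, ?_⟩
  have hmajorant := (hc (‖z‖ / (1 - ‖z‖) : ℝ)).norm.mul_right (1 / (1 - ‖z‖) ^ ‖α‖)
  refine hmajorant.of_nonneg_of_le (fun j => tsum_nonneg fun i => norm_nonneg _) fun j => ?_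
  have hα : ‖α - j‖ ≤ ‖α‖ + j := (norm_sub_le _ _).trans_eq (by rw [Complex.norm_natCast])
  calc ∑' i, ‖c j * (-z) ^ j * (Ring.choose (α - j) i * z ^ i)‖
      = ‖c j‖ * ‖z‖ ^ j * ∑' i, ‖Ring.choose (α - j) i * z ^ i‖ := by
        simp_rw [norm_mul (c j * (-z) ^ j), tsum_mul_left, norm_mul, norm_pow, norm_neg]
    _ ≤ ‖c j‖ * ‖z‖ ^ j * (1 / (1 - ‖z‖) ^ (‖α‖ + j)) := by
        gcongr
        exact tsum_norm_choose_mul_pow_le hα hz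
    _ = ‖c j * (‖z‖ / (1 - ‖z‖) : ℝ) ^ j‖ * (1 / (1 - ‖z‖) ^ ‖α‖) := by
        rw [norm_mul, norm_pow, Complex.norm_real, Real.norm_of_nonneg (by positivity),
          Real.rpow_add_natCast hz'.ne', div_pow]
        field_simp

theorem hasSum_sum_range_mul_choose_mul_pow {G : ℂ → ℂ}
    (hG : ∀ u, HasSum (fun j => c j * u ^ j) (G u)) (α : ℂ) (hz : ‖z‖ < 1) :
    HasSum (fun m => (∑ j ∈ range (m + 1), (-1) ^ j * c j * Ring.choose (α - j) (m - j)) * z ^ m)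
      ((1 + z) ^ α * G (-z / (1 + z))) := by
  have hz1 := one_add_ne_zero_of_norm_lt_one hz
  have hdouble := (summable_mul_pow_mul_choose_mul_pow (fun u => (hG u).summable) α hz).hasSum
  have hrow (j : ℕ) := (hasSum_choose_mul_pow (α - j) hz).mul_left (c j * (-z) ^ j)
  have hvalue := (hG (-z / (1 + z))).mul_left ((1 + z) ^ α)
  have hrow_eq (j : ℕ) : (1 + z) ^ α * (c j * (-z / (1 + z)) ^ j) =
      c j * (-z) ^ j * (1 + z) ^ (α - j) := by
    rw [cpow_sub _ _ hz1, cpow_natCast, div_pow]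
    ring
  simp_rw [hrow_eq] at hvalue
  rw [(hdouble.prod_fiberwise hrow).unique hvalue] at hdouble
  convert! hasSum_sum_range_of_hasSum_prod hdouble using 2 with m
  rw [Finset.sum_mul]
  refine Finset.sum_congr rfl fun j hj => ?_
  rw [← pow_mul_pow_sub z (mem_range_succ_iff.1 hj), neg_pow z]
  ring

end EulerTransform

section ZetaExpansion

lemma zetaPowAux_eq_riemannZeta₁_pow (k : ℕ) : zetaPowAux k = fun s => riemannZeta₁ s ^ k := by
  ext s
  rcases eq_or_ne s 1 with rfl | hs
  · simp [zetaPowAux]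
  · rw [zetaPowAux, Function.update_of_ne hs, riemannZeta_eq_inv_sub_mul hs,
      mul_inv_cancel_left₀ (sub_ne_zero.2 hs)]

lemma differentiable_zetaPowAux (k : ℕ) : Differentiable ℂ (zetaPowAux k) := by
  rw [zetaPowAux_eq_riemannZeta₁_pow]
  exact differentiable_riemannZeta₁.pow k

lemma zetaPowAux_conj (k : ℕ) (s : ℂ) :
    zetaPowAux k (starRingEnd ℂ s) = starRingEnd ℂ (zetaPowAux k s) := by
  rcases eq_or_ne s 1 with rfl | hs
  · simp [zetaPowAux]
  · have hs' : starRingEnd ℂ s ≠ 1 := (map_ne_one_iff _ (starRingEnd ℂ).injective).2 hs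
    simp [zetaPowAux, Function.update_of_ne, hs, hs']

lemma iteratedDeriv_conj_of_conj {f : ℂ → ℂ}
    (hf : ∀ s, f (starRingEnd ℂ s) = starRingEnd ℂ (f s)) (j : ℕ) (s : ℂ) :
    iteratedDeriv j f (starRingEnd ℂ s) = starRingEnd ℂ (iteratedDeriv j f s) := by
  induction j generalizing s with
  | zero => simpa using hf s
  | succ j ih =>
    have hconj : starRingEnd ℂ ∘ iteratedDeriv j f ∘ starRingEnd ℂ = iteratedDeriv j f := by
      ext x
      simp [ih]
    rw [iteratedDeriv_succ]
    conv_lhs => rw [← hconj]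
    simp only [deriv_conj_conj, Function.comp_apply, Complex.conj_conj]

lemma ofReal_lam (k j : ℕ) : (lam k j : ℂ) = iteratedDeriv j (zetaPowAux k) 1 := by
  have hreal := iteratedDeriv_conj_of_conj (zetaPowAux_conj k) j 1
  rw [map_one] at hreal
  exact Complex.conj_eq_iff_re.1 hreal.symm

lemma hasSum_zetaPowAux_one_add (k : ℕ) (u : ℂ) :
    HasSum (fun j : ℕ => (lam k j / j.factorial : ℂ) * u ^ j) (zetaPowAux k (1 + u)) := by
  simpa only [smul_eq_mul, add_sub_cancel_left, ofReal_lam, div_eq_inv_mul, mul_left_comm (u ^ _),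
    mul_comm (u ^ _), mul_assoc] using
    Complex.hasSum_taylorSeries_of_entire (differentiable_zetaPowAux k) 1 (1 + u)

lemma ell_sub_eq_sum_of_le {k m : ℕ} (hmk : m ≤ k) :
    ell k (m - k) = (-1) ^ k *
      ∑ j ∈ range (m + 1), (-1) ^ j * (lam k j / j.factorial) *
        Ring.choose (k - j : ℝ) (m - j) := by
  rw [ell, if_neg (by omega), show ((k : ℤ) + (m - k)).toNat = m by omega,
    show (-((m : ℤ) - k)).toNat = k - m by omega]
  congr 1
  refine Finset.sum_congr rfl fun j hj => ?_
  have hjm : j ≤ m := mem_range_succ_iff.1 hj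
  rw [choose_natCast_sub_natCast (hjm.trans hmk),
    Nat.choose_symm_of_eq_add (show k - j = k - m + (m - j) by omega)]
  ring

lemma ell_sub_eq_sum_of_lt {k m : ℕ} (hkm : k < m) :
    ell k (m - k) = (-1) ^ k *
      ∑ j ∈ range (m + 1), (-1) ^ j * (lam k j / j.factorial) *
        Ring.choose (k - j : ℝ) (m - j) := by
  obtain ⟨d, rfl⟩ := Nat.exists_eq_add_of_lt hkm
  rw [show k + d + 1 + 1 = (k + 1) + (d + 1) by ring, Finset.sum_range_add,
    sum_range_mul_choose_eq_zero hkm, zero_add, ell, if_pos (by omega),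
    show (((k + d + 1 : ℕ) : ℤ) - k).toNat = d + 1 by omega, ← Finset.Ico_add_one_right_eq_Icc,
    Finset.sum_Ico_eq_sum_range, Finset.mul_sum, Finset.mul_sum, Nat.add_sub_cancel]
  refine Finset.sum_congr rfl fun j hj => ?_
  obtain ⟨e, rfl⟩ := Nat.exists_eq_add_of_le (mem_range_succ_iff.1 hj)
  have hchoose : Ring.choose ((k : ℝ) - (k + 1 + j : ℕ)) e = (-1) ^ e * (j + e).choose j := by
    rw [← choose_neg_natCast_add_one]
    push_cast
    ring_nf
  have hsign : (-1 : ℝ) ^ (j + e + 1) = (-1) ^ k * (-1) ^ (k + 1 + j) * (-1) ^ e := by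
    rw [← pow_add, ← pow_add, show k + (k + 1 + j) + e = 2 * k + (j + e + 1) by ring,
      pow_add _ (2 * k), pow_mul _ 2, neg_one_sq, one_pow, one_mul]
  rw [show k + (j + e) + 1 - (k + 1 + j) = e by omega, hchoose, hsign, Nat.add_sub_cancel_left,
    Nat.add_sub_cancel, show 1 + j + k = k + 1 + j by ring]
  ring

lemma ell_sub_eq_sum (k m : ℕ) :
    ell k (m - k) = (-1) ^ k *
      ∑ j ∈ range (m + 1), (-1) ^ j * (lam k j / j.factorial) *
        Ring.choose (k - j : ℝ) (m - j) :=
  (le_or_gt m k).elim ell_sub_eq_sum_of_le ell_sub_eq_sum_of_lt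

lemma one_add_one_sub_div_self {𝕜 : Type*} [Field 𝕜] {s : 𝕜} (hs : s ≠ 0) :
    1 + (1 - s) / s = s⁻¹ := by
  rw [one_add_div hs, add_sub_cancel, one_div]

lemma norm_one_sub_div_self {s : ℂ} (hs : s.re = 1 / 2) : ‖(1 - s) / s‖ = 1 := by
  have hs0 : s ≠ 0 := by
    rintro rfl
    norm_num at hs
  have hconj : 1 - s = starRingEnd ℂ s := by
    apply Complex.ext <;> norm_num [hs]
  rw [hconj, norm_div, Complex.norm_conj, div_self (norm_ne_zero_iff.2 hs0)]

/-- The function `z ↦ (z * ζ(1 / (1 + z))) ^ k`, extended analytically to `z = 0`. Its Taylor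
coefficients at `0` are the numbers `ℓ_{m - k, k}`, and `z = (1 - s) / s` corresponds to
`1 / (1 + z) = s`. -/
noncomputable def zetaDisc (k : ℕ) (z : ℂ) : ℂ :=
  (-(1 + z)) ^ k * zetaPowAux k (1 + z)⁻¹

lemma zetaDisc_one_sub_div_self (k : ℕ) {s : ℂ} (hs0 : s ≠ 0) (hs1 : s ≠ 1) :
    zetaDisc k ((1 - s) / s) = ((1 - s) / s) ^ k * riemannZeta s ^ k := by
  rw [zetaDisc, one_add_one_sub_div_self hs0, inv_inv, zetaPowAux, Function.update_of_ne hs1,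
    ← mul_pow, ← mul_pow]
  ring

lemma differentiableAt_zetaDisc (k : ℕ) {z : ℂ} (hz : 1 + z ≠ 0) :
    DifferentiableAt ℂ (zetaDisc k) z := by
  have hinv : DifferentiableAt ℂ (fun z : ℂ => (1 + z)⁻¹) z := by fun_prop (disch := exact hz)
  exact DifferentiableAt.mul (by fun_prop) ((differentiable_zetaPowAux k _).comp z hinv)

lemma hasSum_zetaDisc (k : ℕ) {z : ℂ} (hz : ‖z‖ < 1) :
    HasSum (fun m : ℕ => (ell k (m - k) : ℂ) * z ^ m) (zetaDisc k z) := by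
  have hz1 := one_add_ne_zero_of_norm_lt_one hz
  convert! (hasSum_sum_range_mul_choose_mul_pow (hasSum_zetaPowAux_one_add k) k hz).mul_left
    ((-1) ^ k) using 1
  · ext m
    rw [ell_sub_eq_sum]
    push_cast [Complex.ofReal_choose]
    rw [mul_assoc]
  · rw [zetaDisc, cpow_natCast, neg_pow, mul_assoc, show 1 + -z / (1 + z) = (1 + z)⁻¹ by
      field_simp
      ring]

end ZetaExpansion

theorem stmt2 (k : ℕ) (hk : 0 < k)
    (h : Summable fun m : ℕ => (ell k ((m : ℤ) - k)) ^ 2) (t : ℝ) :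
    Tendsto (fun N : ℕ => ∑ m ∈ Finset.range N,
        (ell k ((m : ℤ) - k) : ℂ) *
          ((1 / 2 - t * Complex.I) / (1 / 2 + t * Complex.I)) ^ ((m : ℤ) - k))
      atTop (𝓝 (riemannZeta (1 / 2 + t * Complex.I) ^ k)) := by
  set s : ℂ := 1 / 2 + t * Complex.I with hs
  have hre : s.re = 1 / 2 := by simp [hs]
  have hs0 : s ≠ 0 := by
    intro h0
    norm_num [h0] at hre
  have hs1 : s ≠ 1 := by
    intro h1
    norm_num [h1] at hre
  have hdiff : DifferentiableAt ℂ (zetaDisc k) ((1 - s) / s) := differentiableAt_zetaDisc k <| by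
    rw [one_add_one_sub_div_self hs0]
    exact inv_ne_zero hs0
  rw [show 1 / 2 - t * Complex.I = 1 - s by rw [hs]; ring]
  refine tendsto_sum_range_mul_zpow_sub (div_ne_zero (sub_ne_zero.2 hs1.symm) hs0) ?_
  rw [← zetaDisc_one_sub_div_self k hs0 hs1]
  exact tendsto_sum_range_of_summable_norm_sq (norm_one_sub_div_self hre) (by simpa using h)
    (fun z hz => hasSum_zetaDisc k (mem_ball_zero_iff.1 hz))
    (hdiff.isBigO_sub.mono nhdsWithin_le_nhds)
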